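/- Let D₁₀ be the convex decagon in ℝ² with vertices (−3/5, −5/4), (3/5, −3/4), (7/5, −1/4), (8/5, 1/4), (7/5, 3/4), (3/5, 5/4), (−3/5, 3/4), (−7/5, 1/4), (−8/5, −1/4), (−7/5, −3/4). Then D₁₀ + ℤ² is a five-fold translative tiling of the plane, and no k-fold translative tiling of the plane by D₁₀ exists for any k ≤ 4; hence τ(D₁₀) = 5. -/

import Mathlib

open Pointwise

/-- `K + X` is a `k`-fold translative tiling of the plane: the translate multiset
`(x i)` is discrete, every point of the plane belongs to at least `k` of the translates
`K + x i`, and every point belongs to at most `k` of the translates `interior K + x i`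
(multiplicity counted over the index set). -/
def IsKFoldTranslativeTiling {ι : Type} (K : Set (ℝ × ℝ)) (x : ι → ℝ × ℝ) (k : ℕ) : Prop :=
  (∀ R : ℝ, {i : ι | ‖x i‖ ≤ R}.Finite) ∧
  (∀ p : ℝ × ℝ, ∃ s : Finset ι, k ≤ s.card ∧ ∀ i ∈ s, p - x i ∈ K) ∧
  (∀ p : ℝ × ℝ, ∀ s : Finset ι, (∀ i ∈ s, p - x i ∈ interior K) → s.card ≤ k)

/-- `P` is a (two-dimensional) convex polygon whose vertex set is the finite set `V`:
`P` is the convex hull of `V`, every element of `V` is an extreme point of `P`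
(so `V` is exactly the vertex set), and `P` has nonempty interior. -/
def IsConvexPolygon (P : Set (ℝ × ℝ)) (V : Finset (ℝ × ℝ)) : Prop :=
  P = convexHull ℝ (V : Set (ℝ × ℝ)) ∧
  (∀ v ∈ V, v ∈ Set.extremePoints ℝ P) ∧
  (interior P).Nonempty

/-- `P` is symmetric about some point `c`. -/
def IsCentrallySymmetric (P : Set (ℝ × ℝ)) : Prop :=
  ∃ c : ℝ × ℝ, ∀ p ∈ P, 2 • c - p ∈ P

/-- The segment `[a, b]` is an edge of the convex polygon `P` with vertex set `V`. -/
def IsEdge (P : Set (ℝ × ℝ)) (V : Finset (ℝ × ℝ)) (a b : ℝ × ℝ) : Prop :=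
  a ∈ V ∧ b ∈ V ∧ a ≠ b ∧ segment ℝ a b ⊆ frontier P

/-- The decagon `D₁₀` with the ten listed vertices. -/
noncomputable def D₁₀ : Set (ℝ × ℝ) :=
  convexHull ℝ ({((-3 / 5 : ℝ), (-5 / 4 : ℝ)), (3 / 5, -3 / 4), (7 / 5, -1 / 4),
    (8 / 5, 1 / 4), (7 / 5, 3 / 4), (3 / 5, 5 / 4), (-3 / 5, 3 / 4), (-7 / 5, 1 / 4),
    (-8 / 5, -1 / 4), (-7 / 5, -3 / 4)} : Set (ℝ × ℝ))

/-!
Moving every point a little along a direction `u` turns a `k`-fold tiling by a convex body `K` into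
an exactly `k`-fold covering by a half-open version of `K`. Comparing `u` with `-u`, for `u`
parallel to the supporting lines at a pair `V`, `-V` of opposite vertices, shows that the number
`F` of translates placed at a given point satisfies
`F (p - V) + F (p + V) = F (p - W) + F (p + W)` for all vertices `V` and `W`, that is,
`Δ_{V + W} Δ_{V - W} F = 0`. Since `F` is bounded, these relations for the decagon force the periods
`(2, 0)` and `(0, 1)`. Adding the translate of the tiling by `(-1, 0)` turns the first period into
`(1, 0)`; the points now form a union of cosets of `ℤ²`, each of which covers the half-open decagon
exactly five times. Hence `5 ∣ 2 * k`.
-/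

open Filter Set Function
open scoped Topology fwdDiff

section PairSums

variable {G : Type*} [AddCommGroup G] {S P : Set G} {F : G → ℝ} {v w : G}

/-- A bounded function `F` for which the sums `F (q + v) + F (q - v)` with `v ∈ S` depend on `q`
only. The number of translates placed at a given point is such a function when `S` is the set of
vertices of the tile. -/
structure HasEqualPairSums (S : Set G) (F : G → ℝ) : Prop where
  bounded : ∃ B, ∀ q, |F q| ≤ B
  eq : ∀ v ∈ S, ∀ w ∈ S, ∀ q, F (q + v) + F (q - v) = F (q + w) + F (q - w)

theorem HasEqualPairSums.mono {T : Set G} (hF : HasEqualPairSums T F) (hST : S ⊆ T) :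
    HasEqualPairSums S F :=
  ⟨hF.bounded, fun v hv w hw => hF.eq v (hST hv) w (hST hw)⟩

theorem fwdDiff_comm (F : G → ℝ) (v w : G) : Δ_[v] (Δ_[w] F) = Δ_[w] (Δ_[v] F) := by
  funext q
  simp only [fwdDiff, add_right_comm q v w]
  ring

theorem periodic_fwdDiff_comm : Periodic (Δ_[v] F) w ↔ Periodic (Δ_[w] F) v := by
  refine forall_congr' fun q => ?_
  simp only [fwdDiff, add_right_comm q w v]
  constructor <;> intro h <;> linarith

theorem periodic_fwdDiff_of_periodic (hF : Periodic F v) : Periodic (Δ_[w] F) v := fun q => by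
  simp only [fwdDiff, add_right_comm q v w, hF _]

theorem periodic_of_periodic_fwdDiff_self (hB : ∃ B, ∀ q, |F q| ≤ B)
    (hF : Periodic (Δ_[w] F) w) : Periodic F w := by
  obtain ⟨B, hB⟩ := hB
  intro q
  have linear_growth (n : ℕ) : F (q + n • w) = F q + n * Δ_[w] F q := by
    induction n with
    | zero => simp
    | succ n ih =>
      have hn : Δ_[w] F (q + n • w) = Δ_[w] F q := hF.nsmul n q
      rw [fwdDiff, ih, add_assoc q, ← succ_nsmul] at hn
      push_cast
      linarith
  have bounded_multiples (n : ℕ) : n • |Δ_[w] F q| ≤ 2 * B := by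
    rw [nsmul_eq_mul, ← Nat.abs_cast n, ← abs_mul]
    calc |(n : ℝ) * Δ_[w] F q| = |F (q + n • w) - F q| := by rw [linear_growth]; ring_nf
      _ ≤ |F (q + n • w)| + |F q| := abs_sub _ _
      _ ≤ 2 * B := by linarith [hB (q + n • w), hB q]
  have hzero : |Δ_[w] F q| ≤ 0 := le_of_not_gt fun hpos =>
    let ⟨n, hn⟩ := exists_lt_nsmul hpos (2 * B)
    hn.not_ge (bounded_multiples n)
  exact sub_eq_zero.mp (abs_nonpos_iff.mp hzero)

theorem periodic_of_mem_span (hF : ∀ v ∈ P, Periodic F v) (hw : w ∈ Submodule.span ℤ P) :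
    Periodic F w := by
  induction hw using Submodule.span_induction with
  | mem v hv => exact hF v hv
  | zero => exact fun q => by rw [add_zero]
  | add v w _ _ hv hw => exact hv.add_period hw
  | smul n v _ hv => exact hv.zsmul n

theorem HasEqualPairSums.diff (hF : HasEqualPairSums S F) (w : G) :
    HasEqualPairSums S (Δ_[w] F) where
  bounded := by
    obtain ⟨B, hB⟩ := hF.bounded
    exact ⟨B + B, fun q => (abs_sub _ _).trans (add_le_add (hB _) (hB _))⟩
  eq a ha b hb q := by
    have h₀ := hF.eq a ha b hb q
    have h₁ := hF.eq a ha b hb (q + w)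
    simp only [fwdDiff, add_right_comm q _ w, sub_add_eq_add_sub q _ w]
    linarith

/-- The operator `Δ_[v + w] ∘ Δ_[w - v]` compares the pair sums of `v` and `w` at `q + w`. -/
theorem HasEqualPairSums.periodic_fwdDiff_sub (hF : HasEqualPairSums S F) (hv : v ∈ S)
    (hw : w ∈ S) : Periodic (Δ_[w - v] F) (w + v) := fun q => by
  have h := hF.eq v hv w hw (q + w)
  rw [add_sub_cancel_right] at h
  simp only [fwdDiff]
  rw [show q + (w + v) + (w - v) = q + w + w by abel, show q + (w + v) = q + w + v by abel,
    ← add_sub_assoc q w v]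
  linarith

/-- For every bounded `F` with equal pair sums over `S`, the vector `w` is a period of `F` as soon
as all elements of `P` are periods of `Δ_[w] F`. -/
def ForcesPeriod (S P : Set G) (w : G) : Prop :=
  ∀ F : G → ℝ, HasEqualPairSums S F → (∀ v ∈ P, Periodic (Δ_[w] F) v) → Periodic F w

theorem ForcesPeriod.of_mem_span (hw : w ∈ Submodule.span ℤ P) : ForcesPeriod S P w :=
  fun _ hF hP => periodic_of_periodic_fwdDiff_self hF.bounded (periodic_of_mem_span hP hw)

theorem ForcesPeriod.of_eq_smul_add_smul {a b : G} (l m : ℤ) (h : w = l • a + m • b) :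
    ForcesPeriod S (insert a (insert b P)) w := by
  refine .of_mem_span (h ▸ add_mem ?_ ?_) <;>
    exact Submodule.smul_mem _ _ (Submodule.subset_span (by simp))

theorem ForcesPeriod.of_eq_smul_add_smul_add_smul {a b c : G} (l m n : ℤ)
    (h : w = l • a + m • b + n • c) : ForcesPeriod S (insert a (insert b (insert c P))) w := by
  refine .of_mem_span (h ▸ add_mem (add_mem ?_ ?_) ?_) <;>
    exact Submodule.smul_mem _ _ (Submodule.subset_span (by simp))

theorem ForcesPeriod.split (hv : v ∈ S) (hw : w ∈ S) {u : G}
    (hadd : ForcesPeriod S (insert (w + v) P) u) (hsub : ForcesPeriod S (insert (w - v) P) u) :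
    ForcesPeriod S P u := by
  intro F hF hP
  have hdiff : Periodic (Δ_[w - v] F) u := by
    refine hadd _ (hF.diff _) (forall_mem_insert.2 ⟨?_, fun p hp => ?_⟩)
    · exact periodic_fwdDiff_of_periodic (hF.periodic_fwdDiff_sub hv hw)
    · rw [fwdDiff_comm]
      exact periodic_fwdDiff_of_periodic (hP p hp)
  exact hsub F hF (forall_mem_insert.2 ⟨periodic_fwdDiff_comm.1 hdiff, hP⟩)

end PairSums

section TranslateCount

variable {ι κ E : Type*} [NormedAddCommGroup E] {A B : Set E} {x : ι → E} {y : κ → E}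

/-- A discrete multiset of points `x i`: every ball contains `x i` for only finitely many `i`. -/
def IsDiscreteFamily (x : ι → E) : Prop :=
  ∀ R : ℝ, {i | ‖x i‖ ≤ R}.Finite

/-- The number of translates `A + x i` that contain `p`; it has the junk value `0` when there are
infinitely many. -/
noncomputable def translateCount (x : ι → E) (A : Set E) (p : E) : ℕ :=
  {i | p - x i ∈ A}.ncard

/-- The multiplicity of the point `q` in the multiset of the `x i`. -/
noncomputable def pointMult (x : ι → E) (q : E) : ℕ :=
  translateCount x {0} q

theorem pointMult_eq_ncard (x : ι → E) (q : E) : pointMult x q = {i | x i = q}.ncard := by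
  simp only [pointMult, translateCount, mem_singleton_iff, sub_eq_zero, eq_comm]

theorem translateCount_singleton (x : ι → E) (v p : E) :
    translateCount x {v} p = pointMult x (p - v) := by
  simp only [pointMult, translateCount, mem_singleton_iff, sub_right_comm p v, sub_eq_zero]

theorem translateCount_sub_right (x : ι → E) (A : Set E) (v p : E) :
    translateCount (fun i => x i - v) A p = translateCount x A (p + v) := by
  simp only [translateCount, ← sub_add, sub_add_eq_add_sub]

theorem IsDiscreteFamily.finite_sub_mem (hx : IsDiscreteFamily x) (hA : Bornology.IsBounded A)
    (p : E) : {i | p - x i ∈ A}.Finite := by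
  obtain ⟨R, hR⟩ := hA.exists_norm_le
  refine (hx (‖p‖ + R)).subset fun i hi => ?_
  calc ‖x i‖ = ‖p - (p - x i)‖ := by rw [sub_sub_cancel]
    _ ≤ ‖p‖ + R := (norm_sub_le _ _).trans (by gcongr; exact hR _ hi)

theorem IsDiscreteFamily.sub_right (hx : IsDiscreteFamily x) (v : E) :
    IsDiscreteFamily fun i => x i - v := fun R =>
  (hx (R + ‖v‖)).subset fun i (hi : ‖x i - v‖ ≤ R) =>
    (norm_le_norm_sub_add (x i) v).trans (by gcongr)

theorem IsDiscreteFamily.sumElim (hx : IsDiscreteFamily x) (hy : IsDiscreteFamily y) :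
    IsDiscreteFamily (Sum.elim x y) := fun R =>
  (((hx R).image Sum.inl).union ((hy R).image Sum.inr)).subset <| by
    rintro (i | i) hi
    exacts [.inl (mem_image_of_mem _ hi), .inr (mem_image_of_mem _ hi)]

theorem IsDiscreteFamily.translateCount_sumElim (hx : IsDiscreteFamily x)
    (hy : IsDiscreteFamily y) (hA : Bornology.IsBounded A) (p : E) :
    translateCount (Sum.elim x y) A p = translateCount x A p + translateCount y A p := by
  have hsplit : {i | p - Sum.elim x y i ∈ A} =
      Sum.inl '' {i | p - x i ∈ A} ∪ Sum.inr '' {i | p - y i ∈ A} := by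
    ext (i | i) <;> simp
  have hdisj : Disjoint (Sum.inl '' {i | p - x i ∈ A}) (Sum.inr '' {i | p - y i ∈ A}) := by
    rw [Set.disjoint_left]
    rintro _ ⟨i, -, rfl⟩ ⟨j, -, hij⟩
    exact Sum.inr_ne_inl hij
  rw [translateCount, hsplit,
    ncard_union_eq hdisj ((hx.finite_sub_mem hA p).image _) ((hy.finite_sub_mem hA p).image _),
    ncard_image_of_injective _ Sum.inl_injective, ncard_image_of_injective _ Sum.inr_injective]
  rfl

theorem IsDiscreteFamily.translateCount_mono (hx : IsDiscreteFamily x) (hB : Bornology.IsBounded B)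
    (hAB : A ⊆ B) (p : E) : translateCount x A p ≤ translateCount x B p :=
  ncard_le_ncard (fun _ hi => hAB hi) (hx.finite_sub_mem hB p)

theorem IsDiscreteFamily.translateCount_union_add_inter (hx : IsDiscreteFamily x)
    (hA : Bornology.IsBounded A) (hB : Bornology.IsBounded B) (p : E) :
    translateCount x (A ∪ B) p + translateCount x (A ∩ B) p =
      translateCount x A p + translateCount x B p :=
  ncard_union_add_ncard_inter _ _ (hx.finite_sub_mem hA p) (hx.finite_sub_mem hB p)

theorem IsDiscreteFamily.translateCount_union (hx : IsDiscreteFamily x)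
    (hA : Bornology.IsBounded A) (hB : Bornology.IsBounded B) (hAB : Disjoint A B) (p : E) :
    translateCount x (A ∪ B) p = translateCount x A p + translateCount x B p := by
  rw [← hx.translateCount_union_add_inter hA hB, hAB.inter_eq, translateCount, translateCount]
  simp

theorem IsDiscreteFamily.pointMult_sumElim_sub_right (hx : IsDiscreteFamily x) (v q : E) :
    pointMult (Sum.elim x fun i => x i - v) q = pointMult x q + pointMult x (q + v) := by
  rw [pointMult, hx.translateCount_sumElim (hx.sub_right v) Bornology.isBounded_singleton,
    translateCount_sub_right, pointMult, pointMult]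

theorem IsDiscreteFamily.periodic_pointMult_sumElim_sub_right (hx : IsDiscreteFamily x) {v : E}
    (hv : Periodic (pointMult x) (2 • v)) :
    Periodic (pointMult (Sum.elim x fun i => x i - v)) v := fun q => by
  rw [hx.pointMult_sumElim_sub_right, hx.pointMult_sumElim_sub_right, add_assoc, ← two_nsmul, hv,
    add_comm]

end TranslateCount

section Tiling

variable {ι κ : Type} {K : Set (ℝ × ℝ)} {x : ι → ℝ × ℝ} {y : κ → ℝ × ℝ} {k l : ℕ}

theorem le_ncard_iff_exists_finset {α : Type*} {T : Set α} (hT : T.Finite) :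
    k ≤ T.ncard ↔ ∃ s : Finset α, k ≤ s.card ∧ ∀ i ∈ s, i ∈ T := by
  constructor
  · exact fun h => ⟨hT.toFinset, by rwa [← ncard_eq_toFinset_card T hT], by simp⟩
  · rintro ⟨s, hk, hs⟩
    exact hk.trans (ncard_coe_finset s ▸ ncard_le_ncard hs hT)

theorem ncard_le_iff_forall_finset {α : Type*} {T : Set α} (hT : T.Finite) :
    T.ncard ≤ k ↔ ∀ s : Finset α, (∀ i ∈ s, i ∈ T) → s.card ≤ k := by
  constructor
  · exact fun h s hs => (ncard_coe_finset s ▸ ncard_le_ncard hs hT).trans h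
  · exact fun h => ncard_eq_toFinset_card T hT ▸ h _ (by simp)

theorem isKFoldTranslativeTiling_iff (hK : Bornology.IsBounded K) :
    IsKFoldTranslativeTiling K x k ↔ IsDiscreteFamily x ∧ (∀ p, k ≤ translateCount x K p) ∧
      ∀ p, translateCount x (interior K) p ≤ k := by
  refine and_congr_right fun hx => and_congr (forall_congr' fun p => ?_) (forall_congr' fun p => ?_)
  · exact (le_ncard_iff_exists_finset (IsDiscreteFamily.finite_sub_mem hx hK p)).symm
  · exact (ncard_le_iff_forall_finset
      (IsDiscreteFamily.finite_sub_mem hx (hK.subset interior_subset) p)).symm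

theorem IsKFoldTranslativeTiling.sub_right (hK : Bornology.IsBounded K)
    (hT : IsKFoldTranslativeTiling K x k) (v : ℝ × ℝ) :
    IsKFoldTranslativeTiling K (fun i => x i - v) k := by
  rw [isKFoldTranslativeTiling_iff hK] at hT ⊢
  simp only [translateCount_sub_right]
  exact ⟨hT.1.sub_right v, fun p => hT.2.1 (p + v), fun p => hT.2.2 (p + v)⟩

theorem IsKFoldTranslativeTiling.sumElim (hK : Bornology.IsBounded K)
    (hx : IsKFoldTranslativeTiling K x k) (hy : IsKFoldTranslativeTiling K y l) :
    IsKFoldTranslativeTiling K (Sum.elim x y) (k + l) := by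
  rw [isKFoldTranslativeTiling_iff hK] at hx hy ⊢
  refine ⟨hx.1.sumElim hy.1, fun p => ?_, fun p => ?_⟩
  · rw [hx.1.translateCount_sumElim hy.1 hK]
    exact add_le_add (hx.2.1 p) (hy.2.1 p)
  · rw [hx.1.translateCount_sumElim hy.1 (hK.subset interior_subset)]
    exact add_le_add (hx.2.2 p) (hy.2.2 p)

theorem IsDiscreteFamily.isKFoldTranslativeTiling {A : Set (ℝ × ℝ)} (hx : IsDiscreteFamily x)
    (hK : Bornology.IsBounded K) (hAK : A ⊆ K) (hKA : interior K ⊆ A)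
    (hA : ∀ p, translateCount x A p = k) : IsKFoldTranslativeTiling K x k := by
  rw [isKFoldTranslativeTiling_iff hK]
  exact ⟨hx, fun p => hA p ▸ hx.translateCount_mono hK hAK p,
    fun p => hA p ▸ hx.translateCount_mono (hK.subset hAK) hKA p⟩

theorem IsKFoldTranslativeTiling.pointMult_le (hK : Bornology.IsBounded K)
    (hint : (interior K).Nonempty) (hT : IsKFoldTranslativeTiling K x k) (q : ℝ × ℝ) :
    pointMult x q ≤ k := by
  rw [isKFoldTranslativeTiling_iff hK] at hT
  obtain ⟨v, hv⟩ := hint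
  calc pointMult x q = translateCount x {v} (q + v) := by
        rw [translateCount_singleton, add_sub_cancel_right]
    _ ≤ translateCount x (interior K) (q + v) :=
        hT.1.translateCount_mono (hK.subset interior_subset) (singleton_subset_iff.2 hv) _
    _ ≤ k := hT.2.2 _

end Tiling

section HalfOpen

variable {ι E : Type*} [NormedAddCommGroup E] [NormedSpace ℝ E] {K : Set E} {u : E}

/-- The half-open version of a body `K` in the direction `u`: the points from which a short move
along `u` leads into the interior of `K`. -/
def halfOpen (K : Set E) (u : E) : Set E :=
  {q | ∀ᶠ ε in 𝓝[>] (0 : ℝ), q + ε • u ∈ interior K}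

/-- No edge of `K` is parallel to `u`: a short move along `u` leads from any point either into the
interior of `K` or out of `K`. -/
def IsTransversal (K : Set E) (u : E) : Prop :=
  ∀ q, q ∈ halfOpen K u ∨ ∀ᶠ ε in 𝓝[>] (0 : ℝ), q + ε • u ∉ K

theorem mem_halfOpen {q : E} :
    q ∈ halfOpen K u ↔ ∀ᶠ ε in 𝓝[>] (0 : ℝ), q + ε • u ∈ interior K :=
  Iff.rfl

theorem tendsto_add_smul_nhdsGT_zero (q u : E) :
    Tendsto (fun ε : ℝ => q + ε • u) (𝓝[>] 0) (𝓝 q) := by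
  have : Tendsto (fun ε : ℝ => q + ε • u) (𝓝 0) (𝓝 (q + (0 : ℝ) • u)) :=
    Continuous.tendsto (by fun_prop) 0
  rw [zero_smul, add_zero] at this
  exact this.mono_left nhdsWithin_le_nhds

theorem interior_subset_halfOpen : interior K ⊆ halfOpen K u := fun q hq =>
  (tendsto_add_smul_nhdsGT_zero q u).eventually (isOpen_interior.mem_nhds hq)

theorem halfOpen_subset (hK : IsClosed K) : halfOpen K u ⊆ K := fun q hq =>
  hK.mem_of_tendsto (tendsto_add_smul_nhdsGT_zero q u) <|
    (mem_halfOpen.1 hq).mono fun _ h => interior_subset h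

theorem halfOpen_inter_halfOpen_neg (hK : Convex ℝ K) :
    halfOpen K u ∩ halfOpen K (-u) = interior K := by
  refine Subset.antisymm ?_ (subset_inter interior_subset_halfOpen interior_subset_halfOpen)
  rintro q ⟨hq, hq'⟩
  obtain ⟨ε, hε, hε'⟩ := ((mem_halfOpen.1 hq).and hq').exists
  have hmid : q = (1 / 2 : ℝ) • (q + ε • u) + (1 / 2 : ℝ) • (q + ε • -u) := by module
  rw [hmid]
  exact hK.interior hε hε' (by norm_num) (by norm_num) (by norm_num)

theorem isBounded_setOf_add_smul_mem (hK : Bornology.IsBounded K) (u : E) :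
    Bornology.IsBounded {q | ∃ ε ∈ Ioo (0 : ℝ) 1, q + ε • u ∈ K} := by
  obtain ⟨R, hR⟩ := hK.exists_norm_le
  refine isBounded_iff_forall_norm_le.2 ⟨R + ‖u‖, ?_⟩
  rintro q ⟨ε, hε, hq⟩
  calc ‖q‖ = ‖q + ε • u - ε • u‖ := by rw [add_sub_cancel_right]
    _ ≤ ‖q + ε • u‖ + ‖ε • u‖ := norm_sub_le _ _
    _ ≤ R + ‖u‖ := by
      rw [norm_smul, Real.norm_of_nonneg hε.1.le]
      exact add_le_add (hR _ hq) (mul_le_of_le_one_left (norm_nonneg u) hε.2.le)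

theorem IsTransversal.eventually_add_smul (hu : IsTransversal K u) (q : E) :
    ∀ᶠ ε in 𝓝[>] (0 : ℝ), (q + ε • u ∈ K → q ∈ halfOpen K u) ∧
      (q ∈ halfOpen K u → q + ε • u ∈ interior K) := by
  by_cases hq : q ∈ halfOpen K u
  · filter_upwards [hq] with ε hε using ⟨fun _ => hq, fun _ => hε⟩
  · filter_upwards [(hu q).resolve_left hq] with ε hε
    exact ⟨fun h => (hε h).elim, fun h => (hq h).elim⟩

theorem IsDiscreteFamily.eventually_translateCount {x : ι → E} (hx : IsDiscreteFamily x)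
    (hK : Bornology.IsBounded K) (hu : IsTransversal K u) (p : E) :
    ∀ᶠ ε in 𝓝[>] (0 : ℝ), translateCount x K (p + ε • u) ≤ translateCount x (halfOpen K u) p ∧
      translateCount x (halfOpen K u) p ≤ translateCount x (interior K) (p + ε • u) := by
  set C : Set E := {q | ∃ ε ∈ Ioo (0 : ℝ) 1, q + ε • u ∈ K}
  have hCfin := hx.finite_sub_mem (isBounded_setOf_add_smul_mem hK u) p
  have hunit : ∀ᶠ ε in 𝓝[>] (0 : ℝ), ε ∈ Ioo (0 : ℝ) 1 := Ioo_mem_nhdsGT one_pos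
  have hHC : halfOpen K u ⊆ C := fun q hq =>
    let ⟨ε, hε, hq⟩ := (hunit.and (mem_halfOpen.1 hq)).exists
    ⟨ε, hε, interior_subset hq⟩
  filter_upwards [hunit, (eventually_all_finite hCfin).2
    fun i _ => hu.eventually_add_smul (p - x i)] with ε hε hgood
  simp only [translateCount, add_sub_right_comm p]
  constructor <;> refine ncard_le_ncard (fun i hi => ?_) ?_
  · exact (hgood i ⟨ε, hε, hi⟩).1 hi
  · exact hCfin.subset fun i hi => hHC hi
  · exact (hgood i (hHC hi)).2 hi
  · exact hCfin.subset fun i hi => ⟨ε, hε, interior_subset hi⟩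

theorem IsKFoldTranslativeTiling.translateCount_halfOpen {ι : Type} {x : ι → ℝ × ℝ}
    {K : Set (ℝ × ℝ)} {u : ℝ × ℝ} {k : ℕ} (hT : IsKFoldTranslativeTiling K x k)
    (hK : Bornology.IsBounded K) (hu : IsTransversal K u) (p : ℝ × ℝ) :
    translateCount x (halfOpen K u) p = k := by
  rw [isKFoldTranslativeTiling_iff hK] at hT
  obtain ⟨ε, hle, hge⟩ := (hT.1.eventually_translateCount hK hu p).exists
  exact (hge.trans (hT.2.2 _)).antisymm ((hT.2.1 _).trans hle)

end HalfOpen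

section ExposedPoint

variable {E : Type*} [NormedAddCommGroup E] [NormedSpace ℝ E] {K S : Set E} {l : StrongDual ℝ E}
  {u V W q : E} {a b : ℝ}

theorem lt_of_toExposed_eq_singleton (hV : l.toExposed K = {V}) (hq : q ∈ K) (hne : q ≠ V) :
    l q < l V := by
  have hVK : V ∈ l.toExposed K := hV ▸ mem_singleton V
  refine (hVK.2 q hq).lt_of_ne fun heq => hne ?_
  have hqV : q ∈ l.toExposed K := ⟨hq, fun y hy => heq ▸ hVK.2 y hy⟩
  rwa [hV] at hqV

theorem lt_of_neg_toExposed_eq_singleton (hW : (-l).toExposed K = {W}) (hq : q ∈ K)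
    (hne : q ≠ W) : l W < l q :=
  neg_lt_neg_iff.1 (lt_of_toExposed_eq_singleton hW hq hne)

theorem neg_toExposed_neg (l : StrongDual ℝ E) (K : Set E) :
    (-l).toExposed (-K) = -l.toExposed K := by
  ext q
  refine and_congr_right fun _ => neg_surjective.forall.trans ?_
  simp

theorem mem_of_toExposed_eq_singleton (hV : l.toExposed K = {V}) : V ∈ K :=
  (hV ▸ mem_singleton V : V ∈ l.toExposed K).1

theorem exists_lt_of_toExposed_eq_singleton [Nontrivial E] (hint : (interior K).Nonempty)
    (hV : l.toExposed K = {V}) : ∃ q ∈ K, l q < l V := by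
  by_contra! hge
  have hKV : K ⊆ {V} := fun q hq =>
    by_contra fun hne => (lt_of_toExposed_eq_singleton hV hq hne).not_ge (hge q hq)
  have : (𝓝[≠] V).NeBot := Module.punctured_nhds_neBot ℝ E V
  exact (hint.mono (interior_mono hKV)).ne_empty (interior_singleton V)

theorem exists_toExposed_eq_singleton_of_neg_eq_self (hsymm : -K = K)
    (hV : V ∈ K.exposedPoints ℝ) :
    ∃ l : StrongDual ℝ E, l.toExposed K = {V} ∧ (-l).toExposed K = {-V} := by
  obtain ⟨l, hl : {V} = l.toExposed K⟩ := mem_exposedPoints_iff_exposed_singleton.1 hV ⟨V, rfl⟩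
  exact ⟨l, hl.symm, by rw [← hsymm, neg_toExposed_neg, ← hl, Set.neg_singleton]⟩

theorem convex_setOf_eq_or_lt (l : StrongDual ℝ E) (V : E) : Convex ℝ {q | q = V ∨ l q < l V} := by
  refine convex_iff_forall_pos.2 fun y hy z hz a b ha hb hab => ?_
  have hsplit : l V = a * l V + b * l V := by rw [← add_mul, hab, one_mul]
  simp only [mem_ofPred_eq, map_add, map_smul, smul_eq_mul] at hy hz ⊢
  rcases hy with rfl | hy <;> rcases hz with rfl | hz
  · exact .inl (Convex.combo_self hab _)
  all_goals exact .inr (lt_of_lt_of_eq (by gcongr) hsplit.symm)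

theorem mem_exposedPoints_convexHull (hV : V ∈ S) (hmax : ∀ v ∈ S, v ≠ V → l v < l V) :
    V ∈ (convexHull ℝ S).exposedPoints ℝ := by
  have hsub : convexHull ℝ S ⊆ {q | q = V ∨ l q < l V} :=
    convexHull_min (fun v hv => or_iff_not_imp_left.2 (hmax v hv)) (convex_setOf_eq_or_lt l V)
  refine ⟨subset_convexHull ℝ S hV, l, fun q hq => ?_⟩
  rcases hsub hq with rfl | hlt
  · exact ⟨le_rfl, fun _ => rfl⟩
  · exact ⟨hlt.le, fun hge => absurd hlt hge.not_gt⟩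

theorem exists_ker_eq_span_singleton (hE : Module.finrank ℝ E = 2) (hl : l ≠ 0) :
    ∃ u : E, u ≠ 0 ∧ LinearMap.ker l.toLinearMap = Submodule.span ℝ {u} := by
  have hl' : l.toLinearMap ≠ 0 := fun h => hl (ContinuousLinearMap.coe_injective h)
  have : FiniteDimensional ℝ E := Module.finite_of_finrank_eq_succ hE
  have hker : Module.finrank ℝ (LinearMap.ker l.toLinearMap) = 1 := by
    have := Module.Dual.finrank_ker_add_one_of_ne_zero hl'
    omega
  obtain ⟨u, hu⟩ := ((Submodule.finrank_le_one_iff_isPrincipal _).1 hker.le).principal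
  refine ⟨u, ?_, hu⟩
  rintro rfl
  rw [hu, Submodule.span_zero_singleton, finrank_bot] at hker
  exact zero_ne_one hker

theorem eventually_add_smul_ne (hu : u ≠ 0) (q V : E) :
    ∀ᶠ ε in 𝓝[>] (0 : ℝ), q + ε • u ≠ V := by
  rcases eq_or_ne q V with rfl | hne
  · filter_upwards [self_mem_nhdsWithin] with ε hε
    simpa [hu] using (mem_Ioi.1 hε).ne'
  · exact (tendsto_add_smul_nhdsGT_zero q u).eventually_ne hne

theorem mem_halfOpen_of_mem_interior_of_mem (hK : Convex ℝ K) (ha : q + a • u ∈ interior K)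
    (hb : q + b • u ∈ K) (hmin : min a b ≤ 0) (hmax : 0 < max a b) : q ∈ halfOpen K u := by
  have hab : a ≠ b := by
    rintro rfl
    exact hmax.not_ge (by simpa using hmin)
  filter_upwards [Ioo_mem_nhdsGT hmax] with ε hε
  have hεab : ε ∈ openSegment ℝ a b := by
    rw [openSegment_eq_Ioo' hab]
    exact ⟨hmin.trans_lt hε.1, hε.2⟩
  have hline (t : ℝ) : AffineMap.lineMap q (q + u) t = q + t • u := by
    simp [AffineMap.lineMap_apply, add_comm]
  refine hK.openSegment_interior_self_subset_interior ha hb ?_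
  rw [← hline, ← hline, ← hline, ← image_openSegment]
  exact mem_image_of_mem _ hεab

theorem mem_halfOpen_of_mem_interior_of_pos (hK : Convex ℝ K) (hq : q ∈ K)
    (ha : q + a • u ∈ interior K) (ha₀ : 0 < a) : q ∈ halfOpen K u :=
  mem_halfOpen_of_mem_interior_of_mem hK ha (b := 0) (by rwa [zero_smul, add_zero])
    (min_le_right _ _) (lt_max_of_lt_left ha₀)

theorem exists_mem_interior_of_lt_of_lt (hK : Convex ℝ K) (hint : (interior K).Nonempty)
    (hker : LinearMap.ker l.toLinearMap = Submodule.span ℝ {u}) (hV : V ∈ K) (hW : W ∈ K)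
    (hWq : l W < l q) (hqV : l q < l V) : ∃ s : ℝ, q + s • u ∈ interior K := by
  have hcl := hK.closure_interior_eq_closure_of_nonempty_interior hint
  obtain ⟨a, haq, ha⟩ := mem_closure_iff.1 (hcl ▸ subset_closure hW : W ∈ closure (interior K))
    {y | l y < l q} (isOpen_lt l.continuous continuous_const) hWq
  obtain ⟨b, hqb, hb⟩ := mem_closure_iff.1 (hcl ▸ subset_closure hV : V ∈ closure (interior K))
    {y | l q < l y} (isOpen_lt continuous_const l.continuous) hqV
  obtain ⟨y, hy, hyq⟩ := hK.interior.isPreconnected.intermediate_value ha hb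
    l.continuous.continuousOn ⟨le_of_lt haq, le_of_lt hqb⟩
  have hmem : y - q ∈ LinearMap.ker l.toLinearMap := by simp [hyq]
  rw [hker, Submodule.mem_span_singleton] at hmem
  obtain ⟨s, hs⟩ := hmem
  exact ⟨s, by rwa [hs, add_sub_cancel]⟩

theorem isTransversal_of_toExposed_eq_singleton (hK : Convex ℝ K) (hcl : IsClosed K)
    (hint : (interior K).Nonempty) (hu : u ≠ 0)
    (hker : LinearMap.ker l.toLinearMap = Submodule.span ℝ {u})
    (hV : l.toExposed K = {V}) (hW : (-l).toExposed K = {W}) : IsTransversal K u := by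
  intro q
  have hlu : l u = 0 := (hker ▸ Submodule.mem_span_singleton_self u :)
  by_cases hq : l W < l q ∧ l q < l V
  · obtain ⟨s, hs⟩ := exists_mem_interior_of_lt_of_lt hK hint hker
      (mem_of_toExposed_eq_singleton hV) (mem_of_toExposed_eq_singleton hW) hq.1 hq.2
    rw [or_iff_not_imp_left]
    intro hqH
    rcases le_or_gt s 0 with hs0 | hs0
    · filter_upwards [self_mem_nhdsWithin] with ε hε hεK
      exact hqH <| mem_halfOpen_of_mem_interior_of_mem hK hs hεK (min_le_of_left_le hs0)
        (lt_max_of_lt_right hε)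
    · have hqK : q ∉ K := fun hqK => hqH (mem_halfOpen_of_mem_interior_of_pos hK hqK hs hs0)
      exact (tendsto_add_smul_nhdsGT_zero q u).eventually (hcl.isOpen_compl.mem_nhds hqK)
  · right
    filter_upwards [eventually_add_smul_ne hu q V, eventually_add_smul_ne hu q W] with ε hεV hεW hεK
    have hlt := lt_of_toExposed_eq_singleton hV hεK hεV
    have hgt := lt_of_neg_toExposed_eq_singleton hW hεK hεW
    simp only [map_add, map_smul, hlu, smul_zero, add_zero] at hlt hgt
    exact hq ⟨hgt, hlt⟩

theorem notMem_halfOpen_of_toExposed_eq_singleton (hu : u ≠ 0) (hlu : l u = 0)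
    (hV : l.toExposed K = {V}) : V ∉ halfOpen K u := by
  intro hVH
  obtain ⟨ε, hε, hεne⟩ := ((mem_halfOpen.1 hVH).and (eventually_add_smul_ne hu V V)).exists
  have hlt := lt_of_toExposed_eq_singleton hV (interior_subset hε) hεne
  simp [hlu] at hlt

theorem eq_halfOpen_union_halfOpen_neg_union_pair (hK : Convex ℝ K) (hcl : IsClosed K)
    (hint : (interior K).Nonempty)
    (hker : LinearMap.ker l.toLinearMap = Submodule.span ℝ {u})
    (hV : l.toExposed K = {V}) (hW : (-l).toExposed K = {W}) :
    K = halfOpen K u ∪ halfOpen K (-u) ∪ {V, W} := by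
  have hVK := mem_of_toExposed_eq_singleton hV
  have hWK := mem_of_toExposed_eq_singleton hW
  refine Subset.antisymm (fun q hq => ?_) (union_subset (union_subset (halfOpen_subset hcl)
    (halfOpen_subset hcl)) (pair_subset hVK hWK))
  rw [mem_union, or_iff_not_imp_right]
  intro hqVW
  obtain ⟨hqV, hqW⟩ : q ≠ V ∧ q ≠ W := by simpa using hqVW
  obtain ⟨s, hs⟩ := exists_mem_interior_of_lt_of_lt hK hint hker hVK hWK
    (lt_of_neg_toExposed_eq_singleton hW hq hqW) (lt_of_toExposed_eq_singleton hV hq hqV)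
  rcases lt_trichotomy s 0 with hs0 | rfl | hs0
  · have hs' : q + -s • -u ∈ interior K := by rwa [neg_smul_neg]
    exact .inr (mem_halfOpen_of_mem_interior_of_pos hK hq hs' (neg_pos.2 hs0))
  · exact .inl (interior_subset_halfOpen (by rwa [zero_smul, add_zero] at hs))
  · exact .inl (mem_halfOpen_of_mem_interior_of_pos hK hq hs hs0)

theorem exists_isTransversal_of_toExposed_eq_singleton (hE : Module.finrank ℝ E = 2)
    (hK : Convex ℝ K) (hcl : IsClosed K) (hint : (interior K).Nonempty) (hV : l.toExposed K = {V})
    (hW : (-l).toExposed K = {W}) :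
    ∃ u, IsTransversal K u ∧ IsTransversal K (-u) ∧
      K = halfOpen K u ∪ halfOpen K (-u) ∪ {V, W} ∧
      Disjoint (halfOpen K u ∪ halfOpen K (-u)) {V, W} := by
  have : Nontrivial E := Module.nontrivial_of_finrank_pos (R := ℝ) (by rw [hE]; exact two_pos)
  obtain ⟨y, -, hyV⟩ := exists_lt_of_toExposed_eq_singleton hint hV
  have hl : l ≠ 0 := by
    rintro rfl
    exact lt_irrefl _ hyV
  obtain ⟨u, hu, hker⟩ := exists_ker_eq_span_singleton hE hl
  have hlu : l u = 0 := (hker ▸ Submodule.mem_span_singleton_self u :)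
  have hker_neg : LinearMap.ker l.toLinearMap = Submodule.span ℝ {-u} := by
    rw [hker, ← Set.neg_singleton, Submodule.span_neg]
  refine ⟨u, isTransversal_of_toExposed_eq_singleton hK hcl hint hu hker hV hW,
    isTransversal_of_toExposed_eq_singleton hK hcl hint (neg_ne_zero.2 hu) hker_neg hV hW,
    eq_halfOpen_union_halfOpen_neg_union_pair hK hcl hint hker hV hW, ?_⟩
  rw [disjoint_insert_right, disjoint_singleton_right, mem_union, mem_union, not_or, not_or]
  refine ⟨⟨?_, ?_⟩, ?_, ?_⟩
  · exact notMem_halfOpen_of_toExposed_eq_singleton hu hlu hV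
  · exact notMem_halfOpen_of_toExposed_eq_singleton (neg_ne_zero.2 hu) (by simp [hlu]) hV
  · exact notMem_halfOpen_of_toExposed_eq_singleton hu (by simp [hlu]) hW
  · exact notMem_halfOpen_of_toExposed_eq_singleton (neg_ne_zero.2 hu) (by simp [hlu]) hW

end ExposedPoint

section PairSumsOfTiling

variable {ι : Type} {K : Set (ℝ × ℝ)} {x : ι → ℝ × ℝ} {k : ℕ} {l : StrongDual ℝ (ℝ × ℝ)}
  {V W : ℝ × ℝ}

namespace IsKFoldTranslativeTiling

/-- The translates of either half-open version of `K`, in a direction parallel to the supporting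
lines at `V` and `W`, cover every point exactly `k` times; the two versions overlap in the interior
of `K` and miss only `V` and `W`. -/
theorem pointMult_sub_add_pointMult_sub (hT : IsKFoldTranslativeTiling K x k) (hK : Convex ℝ K)
    (hcpt : IsCompact K) (hint : (interior K).Nonempty) (hV : l.toExposed K = {V})
    (hW : (-l).toExposed K = {W}) (p : ℝ × ℝ) :
    2 * k + (pointMult x (p - V) + pointMult x (p - W)) =
      translateCount x K p + translateCount x (interior K) p := by
  obtain ⟨u, hu, hu', hKeq, hdisj⟩ :=
    exists_isTransversal_of_toExposed_eq_singleton (by simp) hK hcpt.isClosed hint hV hW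
  have hx : IsDiscreteFamily x := hT.1
  have hVW : V ≠ W := by
    rintro rfl
    obtain ⟨y, hy, hyV⟩ := exists_lt_of_toExposed_eq_singleton hint hV
    exact hyV.not_gt (lt_of_neg_toExposed_eq_singleton hW hy (ne_of_apply_ne l hyV.ne))
  have hH := hcpt.isBounded.subset (halfOpen_subset hcpt.isClosed (u := u))
  have hH' := hcpt.isBounded.subset (halfOpen_subset hcpt.isClosed (u := -u))
  have hunion := hx.translateCount_union_add_inter hH hH' p
  have hpair : translateCount x {V, W} p = pointMult x (p - V) + pointMult x (p - W) := by
    rw [insert_eq, hx.translateCount_union Bornology.isBounded_singleton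
      Bornology.isBounded_singleton (disjoint_singleton.2 hVW)]
    simp only [translateCount_singleton]
  have hcount : translateCount x K p =
      translateCount x (halfOpen K u ∪ halfOpen K (-u)) p + translateCount x {V, W} p := by
    rw [← hx.translateCount_union (hH.union hH') (toFinite _).isBounded hdisj, ← hKeq]
  rw [halfOpen_inter_halfOpen_neg hK, hT.translateCount_halfOpen hcpt.isBounded hu,
    hT.translateCount_halfOpen hcpt.isBounded hu'] at hunion
  omega

theorem hasEqualPairSums_pointMult (hT : IsKFoldTranslativeTiling K x k) (hK : Convex ℝ K)
    (hcpt : IsCompact K) (hint : (interior K).Nonempty) (hsymm : -K = K) :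
    HasEqualPairSums (K.exposedPoints ℝ) fun q => (pointMult x q : ℝ) where
  bounded := ⟨k, fun q => by
    rw [Nat.abs_cast, Nat.cast_le]
    exact hT.pointMult_le hcpt.isBounded hint q⟩
  eq := by
    have hsum : ∀ V ∈ K.exposedPoints ℝ, ∀ q, 2 * k + (pointMult x (q + V) + pointMult x (q - V)) =
        translateCount x K q + translateCount x (interior K) q := by
      intro V hV q
      obtain ⟨l, hl, hneg⟩ := exists_toExposed_eq_singleton_of_neg_eq_self hsymm hV
      rw [← hT.pointMult_sub_add_pointMult_sub hK hcpt hint hl hneg, sub_neg_eq_add,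
        add_comm (pointMult x (q - V))]
    intro V hV W hW q
    have := (hsum V hV q).trans (hsum W hW q).symm
    norm_cast
    omega

end IsKFoldTranslativeTiling

end PairSumsOfTiling

section Divisibility

variable {ι E Λ : Type*} [NormedAddCommGroup E] [AddCommGroup Λ] {A : Set E} {x : ι → E}
  {φ : Λ →+ E} {m : ℕ}

theorem IsDiscreteFamily.pointMult_ne_zero_iff (hx : IsDiscreteFamily x) {q : E} :
    pointMult x q ≠ 0 ↔ q ∈ range x := by
  have hfin : {i | x i = q}.Finite := (hx ‖q‖).subset fun i hi => (congrArg norm hi).le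
  rw [pointMult_eq_ncard, ← Nat.pos_iff_ne_zero, ncard_pos hfin]
  rfl

theorem IsDiscreteFamily.exists_finset_translateCount_eq_sum (hx : IsDiscreteFamily x)
    (hA : Bornology.IsBounded A) (p : E) :
    ∃ T : Finset E, (∀ q, q ∈ T ↔ p - q ∈ A ∧ pointMult x q ≠ 0) ∧
      translateCount x A p = ∑ q ∈ T, pointMult x q := by
  classical
  have hJ := hx.finite_sub_mem hA p
  refine ⟨hJ.toFinset.image x, fun q => ?_, ?_⟩
  · rw [hx.pointMult_ne_zero_iff]
    simp only [Finset.mem_image, hJ.mem_toFinset, mem_ofPred_eq, mem_range]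
    constructor
    · rintro ⟨i, hi, rfl⟩
      exact ⟨hi, i, rfl⟩
    · rintro ⟨hi, i, rfl⟩
      exact ⟨i, hi, rfl⟩
  · rw [translateCount, ncard_eq_toFinset_card _ hJ, Finset.card_eq_sum_card_image x]
    refine Finset.sum_congr rfl fun q hq => ?_
    obtain ⟨i, hi, rfl⟩ := Finset.mem_image.1 hq
    rw [pointMult_eq_ncard, ← ncard_coe_finset]
    congr 1
    ext j
    simp only [Finset.coe_filter, hJ.mem_toFinset, mem_ofPred_eq, and_iff_right_iff_imp]
    rintro hj
    rw [hj]
    exact hJ.mem_toFinset.1 hi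

theorem card_eq_translateCount_of_mem_iff (hφ : Injective φ) {T : Finset E} {p q₀ : E}
    (hT : ∀ q, q ∈ T ↔ p - q ∈ A ∧ q - q₀ ∈ φ.range) :
    T.card = translateCount φ A (p - q₀) := by
  have himage : (T : Set E) = (fun z => q₀ + φ z) '' {z | p - q₀ - φ z ∈ A} := by
    ext q
    simp only [Finset.mem_coe, hT, mem_image, mem_ofPred_eq, AddMonoidHom.mem_range, sub_sub]
    constructor
    · rintro ⟨hq, z, hz⟩
      have hqz : q₀ + φ z = q := by rw [hz, add_sub_cancel]
      exact ⟨z, hqz ▸ hq, hqz⟩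
    · rintro ⟨z, hz, rfl⟩
      exact ⟨hz, z, (add_sub_cancel_left _ _).symm⟩
  rw [← ncard_coe_finset, himage]
  exact ncard_image_of_injective _ ((add_right_injective q₀).comp hφ)

theorem IsDiscreteFamily.dvd_translateCount (hx : IsDiscreteFamily x)
    (hA : Bornology.IsBounded A) (hφ : Injective φ) (hm : ∀ p, translateCount φ A p = m)
    (hper : ∀ z, Periodic (pointMult x) (φ z)) (p : E) : m ∣ translateCount x A p := by
  classical
  obtain ⟨T, hT, hsum⟩ := hx.exists_finset_translateCount_eq_sum hA p
  let π : E → E ⧸ φ.range := QuotientAddGroup.mk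
  rw [hsum, ← Finset.sum_fiberwise_of_maps_to fun q => Finset.mem_image_of_mem π]
  refine Finset.dvd_sum fun c hc => ?_
  obtain ⟨q₀, hq₀, rfl⟩ := Finset.mem_image.1 hc
  have hcoset (q : E) : π q = π q₀ ↔ q - q₀ ∈ φ.range := by
    rw [eq_comm, QuotientAddGroup.eq, neg_add_eq_sub]
  have hconst (q : E) (hq : q - q₀ ∈ φ.range) : pointMult x q = pointMult x q₀ := by
    obtain ⟨z, hz⟩ := hq
    rw [← hper z q₀, hz, add_sub_cancel]
  have hfilter (q : E) : q ∈ T.filter (fun q => π q = π q₀) ↔ p - q ∈ A ∧ q - q₀ ∈ φ.range := by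
    rw [Finset.mem_filter, hT, hcoset]
    exact ⟨fun h => ⟨h.1.1, h.2⟩, fun h => ⟨⟨h.1, hconst q h.2 ▸ ((hT q₀).1 hq₀).2⟩, h.2⟩⟩
  have hcard : (T.filter fun q => π q = π q₀).card = m :=
    (card_eq_translateCount_of_mem_iff hφ hfilter).trans (hm _)
  rw [Finset.sum_congr rfl fun q hq => hconst q ((hcoset q).1 (Finset.mem_filter.1 hq).2),
    Finset.sum_const, hcard, smul_eq_mul]
  exact dvd_mul_right _ _

theorem IsKFoldTranslativeTiling.dvd_of_periodic {ι Λ : Type} [AddCommGroup Λ] {x : ι → ℝ × ℝ}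
    {φ : Λ →+ ℝ × ℝ} {K : Set (ℝ × ℝ)} {u : ℝ × ℝ} {k m : ℕ}
    (hT : IsKFoldTranslativeTiling K x k) (hφT : IsKFoldTranslativeTiling K φ m)
    (hK : IsCompact K) (hu : IsTransversal K u) (hφ : Injective φ)
    (hper : ∀ z, Periodic (pointMult x) (φ z)) : m ∣ k := by
  rw [← hT.translateCount_halfOpen hK.isBounded hu 0]
  exact IsDiscreteFamily.dvd_translateCount hT.1
    (hK.isBounded.subset (halfOpen_subset hK.isClosed)) hφ
    (hφT.translateCount_halfOpen hK.isBounded hu) hper 0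

end Divisibility

section LatticeCount

/-- The embedding of `ℤ²` into the plane. -/
def latticeHom : ℤ × ℤ →+ ℝ × ℝ :=
  (Int.castAddHom ℝ).prodMap (Int.castAddHom ℝ)

theorem latticeHom_apply (z : ℤ × ℤ) : latticeHom z = ((z.1 : ℝ), (z.2 : ℝ)) :=
  rfl

theorem latticeHom_injective : Injective latticeHom :=
  Int.cast_injective.prodMap Int.cast_injective

theorem isDiscreteFamily_latticeHom : IsDiscreteFamily latticeHom := fun R => by
  refine (isCompact_closedBall (0 : ℤ × ℤ) R).finite_of_discrete.subset fun z hz => ?_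
  rwa [mem_closedBall_zero_iff]

theorem periodic_latticeHom {F : ℝ × ℝ → ℕ} (h₁ : Periodic F (1, 0)) (h₂ : Periodic F (0, 1))
    (z : ℤ × ℤ) : Periodic F (latticeHom z) := by
  have hz : latticeHom z = z.1 • ((1, 0) : ℝ × ℝ) + z.2 • ((0, 1) : ℝ × ℝ) := by
    simp [latticeHom_apply]
  rw [hz]
  exact (h₁.zsmul z.1).add_period (h₂.zsmul z.2)

theorem translateCount_latticeHom_eq_sum {f g : ℝ → ℝ} {p : ℝ × ℝ} (s : Finset ℤ)
    (hs : ∀ n ∉ s, g (p.2 - n) ≤ f (p.2 - n)) :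
    translateCount latticeHom {q | f q.2 ≤ q.1 ∧ q.1 < g q.2} p =
      ∑ n ∈ s, (⌊p.1 - f (p.2 - n)⌋ - ⌊p.1 - g (p.2 - n)⌋).toNat := by
  have hrows : {z | p - latticeHom z ∈ {q : ℝ × ℝ | f q.2 ≤ q.1 ∧ q.1 < g q.2}} =
      s.biUnion fun n => Finset.Ioc ⌊p.1 - g (p.2 - n)⌋ ⌊p.1 - f (p.2 - n)⌋ ×ˢ {n} := by
    ext ⟨m, n⟩
    have hmem : (m, n) ∈ {z | p - latticeHom z ∈ {q : ℝ × ℝ | f q.2 ≤ q.1 ∧ q.1 < g q.2}} ↔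
        ⌊p.1 - g (p.2 - n)⌋ < m ∧ m ≤ ⌊p.1 - f (p.2 - n)⌋ := by
      rw [Int.floor_lt, Int.le_floor, sub_lt_comm, le_sub_comm, and_comm]
      rfl
    have hn (h : ⌊p.1 - g (p.2 - n)⌋ < m ∧ m ≤ ⌊p.1 - f (p.2 - n)⌋) : n ∈ s := by
      by_contra hns
      exact (h.1.trans_le h.2).not_ge (Int.floor_le_floor (sub_le_sub_left (hs n hns) _))
    rw [hmem]
    simpa using hn
  rw [translateCount, hrows, ncard_coe_finset, Finset.card_biUnion]
  · simp
  · intro n _ n' _ hne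
    exact Finset.disjoint_product.2 (.inr (Finset.disjoint_singleton.2 hne))

end LatticeCount

section Convexity

variable {E : Type*} [AddCommGroup E] [Module ℝ E]

theorem convex_setOf_fst_le {f : E → ℝ} (hf : ConcaveOn ℝ univ f) :
    Convex ℝ {q : ℝ × E | q.1 ≤ f q.2} := by
  have := hf.convex_hypograph.linear_preimage (LinearEquiv.prodComm ℝ ℝ E).toLinearMap
  simpa using this

theorem add_smul_mem_of_mem_Icc {C : Set E} (hC : Convex ℝ C) {p v : E} {r s t : ℝ}
    (hs : p + s • v ∈ C) (ht : p + t • v ∈ C) (hr : r ∈ Icc s t) : p + r • v ∈ C := by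
  have h := (hC.affine_preimage (AffineMap.lineMap p (p + v) : ℝ →ᵃ[ℝ] E)).ordConnected.out
    (x := s) (y := t)
  have := h (by simpa [AffineMap.lineMap_apply, add_comm] using hs)
    (by simpa [AffineMap.lineMap_apply, add_comm] using ht) hr
  simpa [AffineMap.lineMap_apply, add_comm] using this

end Convexity

/-- The vertices of `D₁₀` on its right boundary strictly above the lowest vertex, listed upwards;
the remaining vertices are their negatives. -/
noncomputable def rightVertex : Fin 5 → ℝ × ℝ
  | 0 => (3 / 5, -3 / 4)
  | 1 => (7 / 5, -1 / 4)
  | 2 => (8 / 5, 1 / 4)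
  | 3 => (7 / 5, 3 / 4)
  | 4 => (3 / 5, 5 / 4)

section RightVertex

variable {P : Set (ℝ × ℝ)} {w : ℝ × ℝ}

theorem ForcesPeriod.split_rightVertex (i j : Fin 5)
    (hadd : ForcesPeriod (range rightVertex) (insert (rightVertex j + rightVertex i) P) w)
    (hsub : ForcesPeriod (range rightVertex) (insert (rightVertex j - rightVertex i) P) w) :
    ForcesPeriod (range rightVertex) P w :=
  .split (mem_range_self i) (mem_range_self j) hadd hsub

theorem forcesPeriod_two_zero : ForcesPeriod (range rightVertex) P (2, 0) := by
  refine .split_rightVertex 0 3 (.of_mem_span <| Submodule.subset_span <| .inl ?_) <|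
    .split_rightVertex 1 2
      (.split_rightVertex 3 4
        (.of_eq_smul_add_smul_add_smul (-30) 10 40 ?_)
        (.of_eq_smul_add_smul_add_smul (-30) (-10) 10 ?_))
      (.of_eq_smul_add_smul (-30) 10 ?_)
  all_goals ext <;> norm_num [rightVertex]

theorem forcesPeriod_zero_one (hP : (2, 0) ∈ P) : ForcesPeriod (range rightVertex) P (0, 1) := by
  rw [← insert_eq_of_mem hP]
  refine .split_rightVertex 0 1 (.of_eq_smul_add_smul (-1) 1 ?_) <|
    .split_rightVertex 3 4
      (.of_eq_smul_add_smul_add_smul (-2) 10 (-2) ?_)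
      (.of_eq_smul_add_smul_add_smul 1 1 0 ?_)
  all_goals ext <;> norm_num [rightVertex]

theorem HasEqualPairSums.periodic_two_zero {F : ℝ × ℝ → ℝ}
    (hF : HasEqualPairSums (range rightVertex) F) : Periodic F (2, 0) :=
  forcesPeriod_two_zero F hF (P := ∅) (by simp)

theorem HasEqualPairSums.periodic_zero_one {F : ℝ × ℝ → ℝ}
    (hF : HasEqualPairSums (range rightVertex) F) : Periodic F (0, 1) :=
  forcesPeriod_zero_one (mem_singleton _) F hF <| by
    simpa using periodic_fwdDiff_of_periodic hF.periodic_two_zero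

end RightVertex

section Decagon

variable {y : ℝ}

/-- The abscissa of the right boundary of `D₁₀` at height `y ∈ [-5/4, 5/4]`: each affine function
in the minimum describes one edge. -/
noncomputable def decagonRight (y : ℝ) : ℝ :=
  min (12 / 5 + 12 / 5 * y) <| min (9 / 5 + 8 / 5 * y) <| min (3 / 2 + 2 / 5 * y) <|
    min (17 / 10 - 2 / 5 * y) (13 / 5 - 8 / 5 * y)

/-- The abscissa of the left boundary of `D₁₀`, the reflection of the right boundary in `0`. -/
noncomputable def decagonLeft (y : ℝ) : ℝ :=
  -decagonRight (-y)

theorem decagonRight_eq₀ (h : y ≤ -3 / 4) : decagonRight y = 12 / 5 + 12 / 5 * y := by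
  unfold decagonRight
  grind

theorem decagonRight_eq₁ (h : y ∈ Icc (-3 / 4) (-1 / 4)) :
    decagonRight y = 9 / 5 + 8 / 5 * y := by
  obtain ⟨h, h'⟩ := h
  unfold decagonRight
  grind

theorem decagonRight_eq₂ (h : y ∈ Icc (-1 / 4) (1 / 4)) :
    decagonRight y = 3 / 2 + 2 / 5 * y := by
  obtain ⟨h, h'⟩ := h
  unfold decagonRight
  grind

theorem decagonRight_eq₃ (h : y ∈ Icc (1 / 4) (3 / 4)) :
    decagonRight y = 17 / 10 - 2 / 5 * y := by
  obtain ⟨h, h'⟩ := h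
  unfold decagonRight
  grind

theorem decagonRight_eq₄ (h : 3 / 4 ≤ y) : decagonRight y = 13 / 5 - 8 / 5 * y := by
  unfold decagonRight
  grind

theorem decagonRight_le_edges (y : ℝ) :
    decagonRight y ≤ 12 / 5 + 12 / 5 * y ∧ decagonRight y ≤ 13 / 5 - 8 / 5 * y := by
  simp [decagonRight]

theorem decagonRight_sub_decagonLeft_le (y : ℝ) :
    decagonRight y - decagonLeft y ≤ 5 - 4 * |y| := by
  have hy := decagonRight_le_edges y
  have hy' := decagonRight_le_edges (-y)
  rw [decagonLeft]
  rcases abs_cases y with ⟨h, -⟩ | ⟨h, -⟩ <;> rw [h] <;> linarith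

theorem continuous_decagonRight : Continuous decagonRight := by
  unfold decagonRight
  fun_prop

theorem continuous_decagonLeft : Continuous decagonLeft :=
  (continuous_decagonRight.comp continuous_neg).neg

theorem concaveOn_decagonRight : ConcaveOn ℝ univ decagonRight := by
  have affine (c d : ℝ) : ConcaveOn ℝ univ fun y => c + d * y :=
    (concaveOn_const c convex_univ).add ((LinearMap.mul ℝ ℝ d).concaveOn convex_univ)
  have affine' (c d : ℝ) : ConcaveOn ℝ univ fun y => c - d * y := by
    simpa [sub_eq_add_neg] using affine c (-d)
  exact (affine _ _).inf <| (affine _ _).inf <| (affine _ _).inf <| (affine' _ _).inf (affine' _ _)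

theorem neg_decagon : -D₁₀ = D₁₀ := by
  rw [D₁₀, ← convexHull_neg]
  congr 1
  ext q
  simp only [Set.mem_neg, mem_insert_iff, mem_singleton_iff, neg_eq_iff_eq_neg, Prod.neg_mk]
  norm_num [neg_div]
  tauto

theorem neg_mem_decagon_iff {q : ℝ × ℝ} : -q ∈ D₁₀ ↔ q ∈ D₁₀ := by
  rw [← Set.mem_neg, neg_decagon]

theorem convex_decagon : Convex ℝ D₁₀ :=
  convex_convexHull ℝ _

theorem isCompact_decagon : IsCompact D₁₀ :=
  (Set.toFinite _).isCompact_convexHull ℝ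

theorem rightVertex_mem_decagon (i : Fin 5) : rightVertex i ∈ D₁₀ := by
  refine subset_convexHull ℝ _ ?_
  fin_cases i <;> simp [rightVertex]

theorem fst_le_decagonRight {q : ℝ × ℝ} (hq : q ∈ D₁₀) : q.1 ≤ decagonRight q.2 := by
  refine convexHull_min ?_ (convex_setOf_fst_le concaveOn_decagonRight) hq
  intro v hv
  rcases hv with rfl | rfl | rfl | rfl | rfl | rfl | rfl | rfl | rfl | rfl <;>
    norm_num [decagonRight]

theorem decagonLeft_le_fst {q : ℝ × ℝ} (hq : q ∈ D₁₀) : decagonLeft q.2 ≤ q.1 :=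
  neg_le.1 (fst_le_decagonRight (neg_mem_decagon_iff.2 hq))

theorem decagonRight_mem_decagon_of_edge {c d s t : ℝ} {V W : ℝ × ℝ} (hV : V ∈ D₁₀)
    (hW : W ∈ D₁₀) (hVs : V = (c + d * s, s)) (hWt : W = (c + d * t, t)) (hy : y ∈ Icc s t)
    (hR : decagonRight y = c + d * y) : (decagonRight y, y) ∈ D₁₀ := by
  have hline (r : ℝ) : (c + d * r, r) = (c, 0) + r • (d, (1 : ℝ)) := by simp [mul_comm]
  rw [hVs, hline] at hV
  rw [hWt, hline] at hW
  rw [hR, hline]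
  exact add_smul_mem_of_mem_Icc convex_decagon hV hW hy

theorem decagonRight_mem_decagon (hy : |y| ≤ 5 / 4) : (decagonRight y, y) ∈ D₁₀ := by
  have hvertex := rightVertex_mem_decagon
  have hlowest := neg_mem_decagon_iff.2 (hvertex 4)
  obtain ⟨hlow, hhigh⟩ := abs_le.1 hy
  rcases le_total y (-3 / 4) with h₀ | h₀
  · have h : y ∈ Icc (-5 / 4) (-3 / 4) := ⟨by linarith, h₀⟩
    refine decagonRight_mem_decagon_of_edge hlowest (hvertex 0) ?_ ?_ h (decagonRight_eq₀ h₀) <;>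
      norm_num [rightVertex]
  rcases le_total y (-1 / 4) with h₁ | h₁
  · have h : y ∈ Icc (-3 / 4) (-1 / 4) := ⟨h₀, h₁⟩
    refine decagonRight_mem_decagon_of_edge (hvertex 0) (hvertex 1) ?_ ?_ h
      (decagonRight_eq₁ h) <;> norm_num [rightVertex]
  rcases le_total y (1 / 4) with h₂ | h₂
  · have h : y ∈ Icc (-1 / 4) (1 / 4) := ⟨h₁, h₂⟩
    refine decagonRight_mem_decagon_of_edge (hvertex 1) (hvertex 2) ?_ ?_ h
      (decagonRight_eq₂ h) <;> norm_num [rightVertex]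
  rcases le_total y (3 / 4) with h₃ | h₃
  · have h : y ∈ Icc (1 / 4) (3 / 4) := ⟨h₂, h₃⟩
    refine decagonRight_mem_decagon_of_edge (c := 17 / 10) (d := -2 / 5) (hvertex 2)
      (hvertex 3) ?_ ?_ h ((decagonRight_eq₃ h).trans (by ring)) <;> norm_num [rightVertex]
  · have h : y ∈ Icc (3 / 4) (5 / 4) := ⟨h₃, hhigh⟩
    refine decagonRight_mem_decagon_of_edge (c := 13 / 5) (d := -8 / 5) (hvertex 3)
      (hvertex 4) ?_ ?_ h ((decagonRight_eq₄ h₃).trans (by ring)) <;> norm_num [rightVertex]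

theorem mem_decagon_iff {q : ℝ × ℝ} :
    q ∈ D₁₀ ↔ decagonLeft q.2 ≤ q.1 ∧ q.1 ≤ decagonRight q.2 := by
  refine ⟨fun hq => ⟨decagonLeft_le_fst hq, fst_le_decagonRight hq⟩, fun h => ?_⟩
  obtain ⟨x, y⟩ := q
  have hy : |y| ≤ 5 / 4 := by
    linarith [decagonRight_sub_decagonLeft_le y, h.1.trans h.2]
  have hleft : (decagonLeft y, y) ∈ D₁₀ := by
    rw [← neg_mem_decagon_iff]
    simpa [decagonLeft] using decagonRight_mem_decagon (y := -y) (by rwa [abs_neg])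
  have horizontal (r : ℝ) : ((r, y) : ℝ × ℝ) = (0, y) + r • (1, 0) := by simp
  rw [horizontal] at hleft ⊢
  refine add_smul_mem_of_mem_Icc convex_decagon hleft ?_ h
  rw [← horizontal]
  exact decagonRight_mem_decagon hy

theorem rightVertex_mem_exposedPoints_decagon (i : Fin 5) :
    rightVertex i ∈ D₁₀.exposedPoints ℝ := by
  let fst := ContinuousLinearMap.fst ℝ ℝ ℝ
  let snd := ContinuousLinearMap.snd ℝ ℝ ℝ
  let normal : Fin 5 → ℝ × ℝ →L[ℝ] ℝ :=
    ![fst - (2 : ℝ) • snd, fst - snd, fst, fst + snd, snd]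
  refine mem_exposedPoints_convexHull (l := normal i) ?_ ?_
  · fin_cases i <;> simp [rightVertex]
  · intro v hv
    fin_cases i <;> rcases hv with rfl | rfl | rfl | rfl | rfl | rfl | rfl | rfl | rfl | rfl <;>
      norm_num [rightVertex, normal, fst, snd]

theorem interior_decagon_nonempty : (interior D₁₀).Nonempty := by
  have hopen : IsOpen {q : ℝ × ℝ | decagonLeft q.2 < q.1 ∧ q.1 < decagonRight q.2} :=
    (isOpen_lt (continuous_decagonLeft.comp continuous_snd) continuous_fst).and
      (isOpen_lt continuous_fst (continuous_decagonRight.comp continuous_snd))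
  refine ⟨0, interior_maximal (fun q hq => mem_decagon_iff.2 ⟨hq.1.le, hq.2.le⟩) hopen ?_⟩
  norm_num [decagonLeft, decagonRight]

/-- The decagon without its right boundary; the translates by `ℤ²` cover every point exactly five
times. -/
def halfOpenDecagon : Set (ℝ × ℝ) :=
  {q | decagonLeft q.2 ≤ q.1 ∧ q.1 < decagonRight q.2}

theorem halfOpenDecagon_subset : halfOpenDecagon ⊆ D₁₀ := fun _ hq =>
  mem_decagon_iff.2 ⟨hq.1, hq.2.le⟩

theorem interior_decagon_subset : interior D₁₀ ⊆ halfOpenDecagon := fun q hq => by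
  have hright : ∀ᶠ ε in 𝓝[>] (0 : ℝ), q + ε • ((1, 0) : ℝ × ℝ) ∈ interior D₁₀ :=
    (tendsto_add_smul_nhdsGT_zero q _).eventually (isOpen_interior.mem_nhds hq)
  obtain ⟨ε, hε, hpos⟩ := (hright.and self_mem_nhdsWithin).exists
  have hle : q.1 + ε ≤ decagonRight q.2 := by simpa using fst_le_decagonRight (interior_subset hε)
  exact ⟨decagonLeft_le_fst (interior_subset hq), (lt_add_of_pos_right _ hpos).trans_le hle⟩

theorem sum_row_counts_eq_five_of_le {x : ℝ} (h₁ : -5 / 4 ≤ y) (h₂ : y ≤ -3 / 4) :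
    (⌊x - decagonLeft y⌋ - ⌊x - decagonRight y⌋).toNat +
      (⌊x - decagonLeft (y + 1)⌋ - ⌊x - decagonRight (y + 1)⌋).toNat +
      (⌊x - decagonLeft (y + 2)⌋ - ⌊x - decagonRight (y + 2)⌋).toNat = 5 := by
  have hR := decagonRight_eq₀ h₂
  have hL : decagonLeft y = -(13 / 5 + 8 / 5 * y) := by
    rw [decagonLeft, decagonRight_eq₄ (by linarith)]; ring
  have hmid : x - decagonLeft (y + 1) = x - decagonRight (y + 1) + (3 : ℤ) := by
    rw [decagonLeft, decagonRight_eq₂ ⟨by linarith, by linarith⟩,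
      decagonRight_eq₂ ⟨by linarith, by linarith⟩]
    push_cast; ring
  have hL₂ : decagonLeft (y + 2) = decagonRight y := by
    rw [decagonLeft, decagonRight_eq₀ (by linarith), hR]; ring
  have hR₂ : x - decagonRight (y + 2) = x - decagonLeft y - (2 : ℤ) := by
    rw [hL, decagonRight_eq₄ (by linarith)]
    push_cast; ring
  have hle : ⌊x - decagonRight y⌋ ≤ ⌊x - decagonLeft y⌋ := Int.floor_le_floor (by linarith)
  have hle₂ : ⌊x - decagonLeft y⌋ - 2 ≤ ⌊x - decagonRight y⌋ := by
    rw [← Int.floor_sub_intCast]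
    exact Int.floor_le_floor (by push_cast; linarith)
  rw [hmid, hL₂, hR₂, Int.floor_add_intCast, Int.floor_sub_intCast]
  omega

theorem sum_row_counts_eq_five_of_ge {x : ℝ} (h₁ : -3 / 4 ≤ y) (h₂ : y ≤ -1 / 4) :
    (⌊x - decagonLeft y⌋ - ⌊x - decagonRight y⌋).toNat +
      (⌊x - decagonLeft (y + 1)⌋ - ⌊x - decagonRight (y + 1)⌋).toNat +
      (⌊x - decagonLeft (y + 2)⌋ - ⌊x - decagonRight (y + 2)⌋).toNat = 5 := by
  have hR := decagonRight_eq₁ ⟨h₁, h₂⟩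
  have hL : decagonLeft y = -(17 / 10 + 2 / 5 * y) := by
    rw [decagonLeft, decagonRight_eq₃ ⟨by linarith, by linarith⟩]; ring
  have hL₁ : x - decagonLeft (y + 1) = x - decagonRight y + (2 : ℤ) := by
    rw [hR, decagonLeft, decagonRight_eq₁ ⟨by linarith, by linarith⟩]
    push_cast; ring
  have hR₁ : x - decagonRight (y + 1) = x - decagonLeft y - (3 : ℤ) := by
    rw [hL, decagonRight_eq₃ ⟨by linarith, by linarith⟩]
    push_cast; ring
  have hle : ⌊x - decagonRight y⌋ ≤ ⌊x - decagonLeft y⌋ := Int.floor_le_floor (by linarith)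
  have hle₁ : ⌊x - decagonLeft y⌋ - 3 ≤ ⌊x - decagonRight y⌋ := by
    rw [← Int.floor_sub_intCast]
    exact Int.floor_le_floor (by push_cast; linarith)
  have hle₂ : ⌊x - decagonLeft (y + 2)⌋ ≤ ⌊x - decagonRight (y + 2)⌋ := by
    have hR₂ := decagonRight_sub_decagonLeft_le (y + 2)
    rw [abs_of_nonneg (by linarith)] at hR₂
    exact Int.floor_le_floor (by linarith)
  rw [hL₁, hR₁, Int.floor_add_intCast, Int.floor_sub_intCast]
  omega

theorem translateCount_latticeHom_halfOpenDecagon (p : ℝ × ℝ) :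
    translateCount latticeHom halfOpenDecagon p = 5 := by
  set n := ⌊p.2 + 5 / 4⌋ with hn
  have h₁ := Int.floor_le (p.2 + 5 / 4)
  have h₂ := Int.lt_floor_add_one (p.2 + 5 / 4)
  rw [← hn] at h₁ h₂
  have hempty (m : ℤ) (hm : m ∉ ({n, n - 1, n - 2} : Finset ℤ)) :
      decagonRight (p.2 - m) ≤ decagonLeft (p.2 - m) := by
    have hmn : n + 1 ≤ m ∨ m ≤ n - 3 := by
      simp only [Finset.mem_insert, Finset.mem_singleton] at hm
      omega
    have habs : 5 / 4 ≤ |p.2 - m| := by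
      rcases hmn with hmn | hmn
      · have : (n + 1 : ℝ) ≤ m := mod_cast hmn
        exact le_abs.2 (.inr (by linarith))
      · have : (m : ℝ) ≤ n - 3 := mod_cast hmn
        exact le_abs.2 (.inl (by linarith))
    linarith [decagonRight_sub_decagonLeft_le (p.2 - m)]
  have hrow₁ : p.2 - (n - 1 : ℤ) = p.2 - n + 1 := by push_cast; ring
  have hrow₂ : p.2 - (n - 2 : ℤ) = p.2 - n + 2 := by push_cast; ring
  rw [halfOpenDecagon, translateCount_latticeHom_eq_sum _ hempty, Finset.sum_insert (by grind),
    Finset.sum_pair (by omega), hrow₁, hrow₂, ← add_assoc]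
  rcases le_total (p.2 - n) (-3 / 4) with h | h
  · exact sum_row_counts_eq_five_of_le (by linarith) h
  · exact sum_row_counts_eq_five_of_ge h (by linarith)

theorem isKFoldTranslativeTiling_decagon_latticeHom : IsKFoldTranslativeTiling D₁₀ latticeHom 5 :=
  isDiscreteFamily_latticeHom.isKFoldTranslativeTiling isCompact_decagon.isBounded
    halfOpenDecagon_subset interior_decagon_subset translateCount_latticeHom_halfOpenDecagon

end Decagon

section Main

variable {ι : Type} {x : ι → ℝ × ℝ} {k : ℕ}

theorem exists_isTransversal_decagon : ∃ u, IsTransversal D₁₀ u := by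
  obtain ⟨l, hl, hneg⟩ := exists_toExposed_eq_singleton_of_neg_eq_self neg_decagon
    (rightVertex_mem_exposedPoints_decagon 0)
  obtain ⟨u, hu, -⟩ := exists_isTransversal_of_toExposed_eq_singleton (by simp)
    convex_decagon isCompact_decagon.isClosed interior_decagon_nonempty hl hneg
  exact ⟨u, hu⟩

theorem hasEqualPairSums_pointMult_of_decagon (hT : IsKFoldTranslativeTiling D₁₀ x k) :
    HasEqualPairSums (range rightVertex) fun q => (pointMult x q : ℝ) :=
  (hT.hasEqualPairSums_pointMult convex_decagon isCompact_decagon interior_decagon_nonempty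
    neg_decagon).mono (range_subset_iff.2 rightVertex_mem_exposedPoints_decagon)

theorem IsKFoldTranslativeTiling.periodic_pointMult_two_zero
    (hT : IsKFoldTranslativeTiling D₁₀ x k) : Periodic (pointMult x) (2, 0) := fun q =>
  mod_cast (hasEqualPairSums_pointMult_of_decagon hT).periodic_two_zero q

theorem IsKFoldTranslativeTiling.periodic_pointMult_zero_one
    (hT : IsKFoldTranslativeTiling D₁₀ x k) : Periodic (pointMult x) (0, 1) := fun q =>
  mod_cast (hasEqualPairSums_pointMult_of_decagon hT).periodic_zero_one q

theorem IsKFoldTranslativeTiling.five_dvd (hT : IsKFoldTranslativeTiling D₁₀ x k) : 5 ∣ k := by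
  have hbdd := isCompact_decagon.isBounded
  have hx : IsDiscreteFamily x := hT.1
  have hdouble := hT.sumElim hbdd (hT.sub_right hbdd (1, 0))
  have hper₁ : Periodic (pointMult (Sum.elim x fun i => x i - (1, 0))) (1, 0) :=
    hx.periodic_pointMult_sumElim_sub_right (by simpa using hT.periodic_pointMult_two_zero)
  obtain ⟨u, hu⟩ := exists_isTransversal_decagon
  have h : 5 ∣ k + k := hdouble.dvd_of_periodic isKFoldTranslativeTiling_decagon_latticeHom
    isCompact_decagon hu latticeHom_injective
    (periodic_latticeHom hper₁ hdouble.periodic_pointMult_zero_one)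
  omega

theorem decagon_tau_five_general :
    IsKFoldTranslativeTiling D₁₀ (fun z : ℤ × ℤ => (((z.1 : ℝ), (z.2 : ℝ)) : ℝ × ℝ)) 5 ∧
    ∀ (k : ℕ) (ι : Type) (x : ι → ℝ × ℝ), IsKFoldTranslativeTiling D₁₀ x k → 5 ∣ k :=
  ⟨isKFoldTranslativeTiling_decagon_latticeHom, fun _ _ _ hT => hT.five_dvd⟩

end Main

/-- `D₁₀ + ℤ²` is a five-fold translative tiling of the plane, and `D₁₀` admits no
`k`-fold translative tiling for any `k ≤ 4`; hence `τ(D₁₀) = 5`. -/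
theorem decagon_tau_five :
    IsKFoldTranslativeTiling D₁₀ (fun z : ℤ × ℤ => (((z.1 : ℝ), (z.2 : ℝ)) : ℝ × ℝ)) 5 ∧
    ∀ (k : ℕ), 0 < k → k ≤ 4 →
      ∀ (ι : Type) (x : ι → ℝ × ℝ), ¬ IsKFoldTranslativeTiling D₁₀ x k := by
  refine ⟨decagon_tau_five_general.1, fun k hpos hle ι x hT => ?_⟩
  have := Nat.le_of_dvd hpos (decagon_tau_five_general.2 k ι x hT)
  omega
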